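/- Let N, s, t be integers with 1 ≤ s < t ≤ N − 2, and let e_1, …, e_N be integers with 0 = e_1 ≤ e_2 ≤ … ≤ e_N, e_2 ≥ 1, and e_s = e_{s+1} = … = e_{t−1}. Let r_1 ≥ r_2 ≥ … ≥ r_N be real numbers. Then S(e, r) ≤ B(s,t) · ( Σ_{j=1}^{s} (r_j − r_N) + Σ_{j=t}^{N} (r_j − r_N) ). -/

import Mathlib

open Finset

/-- The value of a chain of indices `l = [i₀, i₁, …, i_ℓ]`:
`Σ_j (r i_j − r i_{j+1}) (e i_j + e i_{j+1})`. -/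
def chainValue (e r : ℕ → ℝ) (l : List ℕ) : ℝ :=
  (List.zipWith (fun a b => (r a - r b) * (e a + e b)) l l.tail).sum

/-- A chain of indices for parameter `N`: a strictly increasing list of indices
starting at `1` and ending at `N`. -/
def IsChainIdx (N : ℕ) (l : List ℕ) : Prop :=
  l.Chain' (· < ·) ∧ l.head? = some 1 ∧ l.getLast? = some N

/-- `S(e, r)` : the minimum of the values of all chains. -/
noncomputable def Smin (e r : ℕ → ℝ) (N : ℕ) : ℝ :=
  sInf (chainValue e r '' {l | IsChainIdx N l})

/-- The quantity `B_i`: for `2 ≤ i ≤ s`, `B_i = e_i² / ((i−1)e_i − Σ_{j=2}^{i−1} e_j)`;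
for `t ≤ i ≤ N`, `B_i = e_i² / ((i−t+s)e_i − (e_1 + … + e_s + e_t + … + e_{i−1}))`. -/
noncomputable def Bcoef (e : ℕ → ℝ) (s t i : ℕ) : ℝ :=
  if i ≤ s then
    (e i) ^ 2 / (((i : ℝ) - 1) * e i - ∑ j ∈ Finset.Icc 2 (i - 1), e j)
  else
    (e i) ^ 2 /
      (((i : ℝ) - t + s) * e i -
        (∑ j ∈ Finset.Icc 1 s, e j + ∑ j ∈ Finset.Icc t (i - 1), e j))

/-- `B(s,t)`: the maximum of the `B_i` over `i ∈ {2,…,s} ∪ {t,…,N}`. -/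
noncomputable def Bmax (e : ℕ → ℝ) (s t N : ℕ) : ℝ :=
  sSup (Bcoef e s t '' (Set.Icc 2 s ∪ Set.Icc t N))

theorem chainValue_append (e r : ℕ → ℝ) (i M : ℕ) : ∀ l : List ℕ, l.getLast? = some i →
    chainValue e r (l ++ [M]) = chainValue e r l + (r i - r M) * (e i + e M) := by
  intro l
  induction l with
  | nil => simp
  | cons a l ih =>
    cases l with
    | nil => intro h; simp at h; subst h; simp [chainValue]
    | cons b l =>
      intro h
      have := ih (by simpa using h)
      simp [chainValue] at this ⊢
      linarith

theorem chainValue_shear (e r : ℕ → ℝ) (c d : ℝ) (i : ℕ) : ∀ (l : List ℕ) (a : ℕ),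
    l.head? = some a → l.getLast? = some i →
    chainValue e (fun j => r j - c - d * (e i - e j)) l
      = chainValue e r l + d * (e a ^ 2 - e i ^ 2) := by
  have key : ∀ (q : ℝ) (l : List ℕ) (a : ℕ),
    l.head? = some a → l.getLast? = some i →
    chainValue e (fun j => r j - c - d * (q - e j)) l
      = chainValue e r l + d * (e a ^ 2 - e i ^ 2) := by
    intro q l
    induction l with
    | nil => simp
    | cons x l ih =>
      cases l with
      | nil => intro a h h'; simp at h h'; subst h; subst h'; simp [chainValue]
      | cons b l =>
        intro a h h'
        have := ih b (by simp) (by simpa using h')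
        simp at h
        subst h
        simp [chainValue] at this ⊢
        rw [this]; ring
  exact key _

theorem chainValue_shear' (e r : ℕ → ℝ) (c d q : ℝ) (i : ℕ) : ∀ (l : List ℕ) (a : ℕ),
    l.head? = some a → l.getLast? = some i →
    chainValue e (fun j => r j - c - d * (q - e j)) l
      = chainValue e r l + d * (e a ^ 2 - e i ^ 2) := by
  intro l a h h'
  have := chainValue_shear e r (c + d * (q - e i)) d i l a h h'
  rw [← this]
  congr 1
  funext j
  ring

theorem chain_main (N : ℕ) (e : ℕ → ℝ) (I : Finset ℕ) (B : ℝ) (hB : 0 ≤ B)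
    (hI : ∀ j ∈ I, 1 ≤ j) (he1 : e 1 = 0)
    (hpos : ∀ i, 2 ≤ i → i ≤ N → 0 < e i)
    (hmono : ∀ i j, 1 ≤ i → i ≤ j → j ≤ N → e i ≤ e j)
    (hBM : ∀ M, 2 ≤ M → M ≤ N → e M ^ 2 ≤ B * ∑ j ∈ I with j ≤ M, (e M - e j)) :
    ∀ M, 1 ≤ M → M ≤ N → ∀ r : ℕ → ℝ, (∀ j, 1 ≤ j → j ≤ M → r M ≤ r j) →
      ∃ l, IsChainIdx M l ∧ chainValue e r l ≤ B * ∑ j ∈ I with j ≤ M, (r j - r M) := by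
  intro M
  induction M using Nat.strong_induction_on with
  | _ M ih =>
  intro h1 hN r hr
  rcases Nat.lt_or_ge M 2 with h | h2
  · obtain rfl : M = 1 := by omega
    refine ⟨[1], ⟨List.isChain_singleton 1, by simp, by simp⟩, ?_⟩
    have : 0 ≤ ∑ j ∈ I with j ≤ 1, (r j - r 1) := by
      apply Finset.sum_nonneg
      intro j hj
      simp at hj
      have := hr j (hI j hj.1) hj.2
      linarith
    simpa [chainValue] using mul_nonneg hB this
  have hMpos := hpos M h2 hN
  have hne : (((Icc 1 M).filter (fun j => e j < e M))).Nonempty :=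
    ⟨1, by simp [he1, hMpos]; omega⟩
  obtain ⟨i, hi, hmin⟩ := Finset.exists_min_image _ (fun j => (r j - r M) / (e M - e j)) hne
  simp only [Finset.mem_filter, Finset.mem_Icc] at hi hmin
  obtain ⟨⟨hi1, hiM⟩, hie⟩ := hi
  have hiltM : i < M := by
    rcases hiM.lt_or_eq with h | h
    · exact h
    · subst h; exact absurd hie (lt_irrefl _)
  set d := (r i - r M) / (e M - e i) with hd
  have hd0 : 0 ≤ d := div_nonneg (by linarith [hr i hi1 hiM]) (by linarith)
  have hdi : r i - r M = d * (e M - e i) := by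
    rw [hd, div_mul_cancel₀]; linarith
  have hge : ∀ j, 1 ≤ j → j ≤ M → 0 ≤ r j - r M - d * (e M - e j) := by
    intro j hj1 hjM
    rcases (hmono j M hj1 hjM hN).lt_or_eq with h | h
    · have := hmin j ⟨⟨hj1, hjM⟩, h⟩
      rw [le_div_iff₀ (by linarith)] at this
      linarith
    · rw [h]; have := hr j hj1 hjM; simp; exact this
  obtain ⟨l, ⟨hl1, hl2, hl3⟩, hlv⟩ := ih i hiltM hi1 (by omega)
    (fun j => r j - r M - d * (e M - e j)) (by
      intro j hj hji
      have := hge j hj (by omega)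
      linarith)
  refine ⟨l ++ [M], ⟨?_, ?_, by simp⟩, ?_⟩
  · refine List.isChain_append.mpr ⟨hl1, List.isChain_singleton M, ?_⟩
    intro x hx y hy
    rw [hl3] at hx
    simp at hx hy
    omega
  · rw [List.head?_append, hl2]; rfl
  · rw [chainValue_append e r i M l hl3]
    rw [chainValue_shear' e r _ d _ i l 1 hl2 hl3] at hlv
    have hsub : ∑ j ∈ I with j ≤ i, (r j - r M - d * (e M - e j) - (r i - r M - d * (e M - e i)))
        ≤ ∑ j ∈ I with j ≤ M, (r j - r M - d * (e M - e j)) := by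
      have : r i - r M - d * (e M - e i) = 0 := by linarith
      rw [this]
      simp only [sub_zero]
      apply Finset.sum_le_sum_of_subset_of_nonneg
      · intro j; simp; intro a b; exact ⟨a, by omega⟩
      · intro j hj _
        simp at hj
        exact hge j (hI j hj.1) hj.2
    have h3 := hBM M h2 hN
    have h4 := mul_le_mul_of_nonneg_left hsub hB
    have h5 := mul_le_mul_of_nonneg_left h3 hd0
    have h6 : ∑ j ∈ I with j ≤ M, (r j - r M - d * (e M - e j))
        = ∑ j ∈ I with j ≤ M, (r j - r M) - d * ∑ j ∈ I with j ≤ M, (e M - e j) := by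
      rw [Finset.mul_sum, ← Finset.sum_sub_distrib]
    rw [h6] at h4
    rw [hdi]
    rw [he1] at hlv
    linarith

theorem chainValue_nonneg (N : ℕ) (e r : ℕ → ℝ)
    (hpos : ∀ i, 1 ≤ i → i ≤ N → 0 ≤ e i)
    (hr : ∀ i j, 1 ≤ i → i ≤ j → j ≤ N → r j ≤ r i) : ∀ l : List ℕ,
    l.IsChain (· < ·) → (∀ x, l.head? = some x → 1 ≤ x) → l.getLast? = some N →
    (∀ x, l.head? = some x → x ≤ N) ∧ 0 ≤ chainValue e r l := by
  intro l
  induction l with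
  | nil => simp
  | cons a l ih =>
    cases l with
    | nil => intro _ h h'; simp at h h'; subst h'; simp [chainValue]
    | cons b l =>
      intro h1 h2 h3
      simp at h2
      rw [List.isChain_cons_cons] at h1
      obtain ⟨h4, h5⟩ := ih h1.2 (by simp; omega) (by simpa using h3)
      simp at h4
      refine ⟨by simp; omega, ?_⟩
      have : chainValue e r (a :: b :: l) = (r a - r b) * (e a + e b) + chainValue e r (b :: l) := by
        simp [chainValue]
      rw [this]
      have := hr a b h2 h1.1.le h4
      have := hpos a h2 (by omega)
      have := hpos b (by omega) (by omega)
      have := mul_nonneg (show 0 ≤ r a - r b by linarith) (show 0 ≤ e a + e b by linarith)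
      linarith

/-- Let `1 ≤ s < t ≤ N − 2`, let `e` be integers with
`0 = e₁ ≤ e₂ ≤ … ≤ e_N`, `e₂ ≥ 1` and `e_s = e_{s+1} = … = e_{t−1}`, and let
`r₁ ≥ r₂ ≥ … ≥ r_N` be reals. Then
`S(e,r) ≤ B(s,t) · (Σ_{j=1}^{s} (r_j − r_N) + Σ_{j=t}^{N} (r_j − r_N))`. -/
theorem stmt0 (N s t : ℕ) (e : ℕ → ℤ) (r : ℕ → ℝ)
    (hs : 1 ≤ s) (hst : s < t) (htN : t ≤ N - 2)
    (he1 : e 1 = 0)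
    (hemono : ∀ i, 1 ≤ i → i < N → e i ≤ e (i + 1))
    (he2 : 1 ≤ e 2)
    (heconst : ∀ i, s ≤ i → i ≤ t - 1 → e i = e s)
    (hr : ∀ i, 1 ≤ i → i < N → r (i + 1) ≤ r i) :
    Smin (fun i => (e i : ℝ)) r N ≤
      Bmax (fun i => (e i : ℝ)) s t N *
        ((∑ j ∈ Icc 1 s, (r j - r N)) + ∑ j ∈ Icc t N, (r j - r N)) := by
  have hmonoZ : ∀ i j, 1 ≤ i → i ≤ j → j ≤ N → e i ≤ e j := by
    intro i j hi hij
    induction j, hij using Nat.le_induction with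
    | base => intro _; exact le_rfl
    | succ j hj ih => intro h; exact (ih (by omega)).trans (hemono j (by omega) (by omega))
  have hrm : ∀ i j, 1 ≤ i → i ≤ j → j ≤ N → r j ≤ r i := by
    intro i j hi hij
    induction j, hij using Nat.le_induction with
    | base => intro _; exact le_rfl
    | succ j hj ih => intro h; exact (hr j (by omega) (by omega)).trans (ih (by omega))
  have hposZ : ∀ i, 2 ≤ i → i ≤ N → 1 ≤ e i := fun i h h' =>
    he2.trans (hmonoZ 2 i (by omega) h h')
  set E : ℕ → ℝ := fun i => (e i : ℝ) with hE
  have hE1 : E 1 = 0 := by simp [hE, he1]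
  have hmono : ∀ i j, 1 ≤ i → i ≤ j → j ≤ N → E i ≤ E j := fun i j a b c => by
    simp only [hE]; exact_mod_cast hmonoZ i j a b c
  have hpos : ∀ i, 2 ≤ i → i ≤ N → 0 < E i := fun i a b => by
    have := hposZ i a b
    simp only [hE]; exact_mod_cast (by omega : 0 < e i)
  have hnn : ∀ i, 1 ≤ i → i ≤ N → 0 ≤ E i := fun i a b => by
    have := hmono 1 i le_rfl a b
    rwa [hE1] at this
  have hdisj : Disjoint (Icc 1 s) (Icc t N) := by
    rw [Finset.disjoint_left]; intro a; simp; omega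
  set I : Finset ℕ := Icc 1 s ∪ Icc t N with hI
  have hbdd : BddAbove (Bcoef E s t '' (Set.Icc 2 s ∪ Set.Icc t N)) :=
    (((Set.finite_Icc 2 s).union (Set.finite_Icc t N)).image _).bddAbove
  have hDpos : ∀ M, 2 ≤ M → M ≤ N → 0 < ∑ j ∈ I with j ≤ M, (E M - E j) := by
    intro M h2 hN
    apply Finset.sum_pos'
    · intro j hj
      simp [hI] at hj
      have := hmono j M (by omega) (by omega) hN
      linarith
    · refine ⟨1, by simp [hI]; omega, ?_⟩
      have := hpos M h2 hN
      linarith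
  have hcoef : ∀ M, (2 ≤ M ∧ M ≤ s ∨ t ≤ M ∧ M ≤ N) →
      Bcoef E s t M = E M ^ 2 / ∑ j ∈ I with j ≤ M, (E M - E j) := by
    intro M hM
    unfold Bcoef
    split_ifs with h
    · congr 1
      have h2 : 2 ≤ M := by omega
      have : I.filter (fun j => j ≤ M) = insert 1 (insert M (Icc 2 (M - 1))) := by
        ext j; simp [hI]; omega
      rw [this, Finset.sum_insert (by simp; omega), Finset.sum_insert (by simp; omega),
        Finset.sum_sub_distrib, hE1]
      simp
      rw [show M - 1 - 1 = M - 2 by omega, Nat.cast_sub (by omega)]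
      push_cast
      ring
    · congr 1
      have : I.filter (fun j => j ≤ M) = insert M (Icc 1 s ∪ Icc t (M - 1)) := by
        ext j; simp [hI]; omega
      rw [this, Finset.sum_insert (by simp; omega), Finset.sum_union (by
        rw [Finset.disjoint_left]; intro a; simp; omega),
        Finset.sum_sub_distrib, Finset.sum_sub_distrib]
      simp
      rw [show M - 1 + 1 - t = M - t by omega, Nat.cast_sub (by omega)]
      ring
  have hle : ∀ M, (2 ≤ M ∧ M ≤ s ∨ t ≤ M ∧ M ≤ N) → Bcoef E s t M ≤ Bmax E s t N := by
    intro M hM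
    apply le_csSup hbdd
    exact ⟨M, by simpa using hM, rfl⟩
  have hB : 0 ≤ Bmax E s t N := by
    refine le_trans ?_ (hle N (by omega))
    rw [hcoef N (by omega)]
    exact div_nonneg (sq_nonneg _) (hDpos N (by omega) le_rfl).le
  have hgood : ∀ M, (2 ≤ M ∧ M ≤ s ∨ t ≤ M ∧ M ≤ N) →
      E M ^ 2 ≤ Bmax E s t N * ∑ j ∈ I with j ≤ M, (E M - E j) := by
    intro M hM
    have := hle M hM
    rw [hcoef M hM, div_le_iff₀ (hDpos M (by omega) (by omega))] at this
    exact this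
  obtain ⟨l, hl, hlv⟩ := chain_main N E I (Bmax E s t N) hB
    (by intro j hj; simp [hI] at hj; omega) hE1 hpos hmono (by
      intro M h2 hMN
      by_cases hM : 2 ≤ M ∧ M ≤ s ∨ t ≤ M ∧ M ≤ N
      · exact hgood M hM
      · have hMs : e M = e s := heconst M (by omega) (by omega)
        have hs2 : 2 ≤ s := by
          by_contra hcon
          obtain rfl : s = 1 := by omega
          have := hposZ M h2 hMN
          omega
        have hEM : E M = E s := by simp only [hE]; rw [hMs]
        have hf : I.filter (fun j => j ≤ M) = I.filter (fun j => j ≤ s) := by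
          ext j; simp [hI]; omega
        rw [hEM, hf]
        exact hgood s (by omega)) N (by omega) le_rfl r
    (fun j h h' => hrm j N h h' le_rfl)
  have hfil : I.filter (fun j => j ≤ N) = I := by
    ext j; simp [hI]; omega
  rw [hfil, hI, Finset.sum_union hdisj] at hlv
  refine le_trans (csInf_le ⟨0, ?_⟩ ⟨l, hl, rfl⟩) hlv
  rintro _ ⟨l', ⟨h1, h2, h3⟩, rfl⟩
  exact (chainValue_nonneg N E r hnn hrm l' h1 (by rw [h2]; simp) h3).2
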